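/- arXiv:2404.04832 — 2 statements merged into one kernel-verified Lean document; each statement's English description precedes it below -/
import Mathlib

section
/- Fix a real constant D > 0 and reals n_h, n_v ≥ 4, and define G(α) = (2α − α²)/l̄(n_h, n_v, α) for α ∈ [0, 1]. Then G is differentiable at α = 0 and at α = 1, with G′(0) = 2/l̄(n_h, n_v, 0) > 0 and G′(1) = −2D·(n_h² + n_v² + 1)/(3(n_h + n_v)·l̄(n_h, n_v, 1)²) < 0. -/
/-- Average travel distance of a sorting task. -/
noncomputable def lbar (D nh nv α : ℝ) : ℝ :=
  2 * D * ((nh^2 + nv^2) / (nh + nv) * ((-α^4 - 5*α^2 + 18*α) / 12)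
    + nh * nv / (nh + nv) * ((-α^2 + 2*α) / 4)
    + (3*α^3 - α^2 - 3*α - 5) / (12 * (nh + nv))
    + (nh + nv) * ((α^2 - 2*α + 1) / 2)
    + (-α^2 + 2*α) / 2)

theorem lbar_hasDerivAt_aux (D nh nv x : ℝ) :
    HasDerivAt (fun α => lbar D nh nv α)
      (2 * D * ((nh^2 + nv^2) / (nh + nv) * ((-(4*x^3) - 10*x + 18) / 12)
    + nh * nv / (nh + nv) * ((-(2*x) + 2) / 4)
    + (9*x^2 - 2*x - 3) / (12 * (nh + nv))
    + (nh + nv) * ((2*x - 2) / 2)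
    + (-(2*x) + 2) / 2)) x := by
  have h1 := hasDerivAt_id' x
  have h2 := hasDerivAt_pow 2 x
  have h3 := hasDerivAt_pow 3 x
  have h4 := hasDerivAt_pow 4 x
  have a := (((h4.neg.sub (h2.const_mul 5)).add (h1.const_mul 18)).div_const 12).const_mul
    ((nh^2 + nv^2) / (nh + nv))
  have b := ((h2.neg.add (h1.const_mul 2)).div_const 4).const_mul (nh * nv / (nh + nv))
  have c := ((((h3.const_mul 3).sub h2).sub (h1.const_mul 3)).sub_const 5).div_const
    (12 * (nh + nv))
  have d := (((h2.sub (h1.const_mul 2)).add_const 1).div_const 2).const_mul (nh + nv)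
  have e := (h2.neg.add (h1.const_mul 2)).div_const 2
  have f := ((((a.add b).add c).add d).add e).const_mul (2 * D)
  unfold lbar
  refine f.congr_deriv ?_
  push_cast
  ring

theorem G_deriv_endpoints
    (D nh nv : ℝ) (hD : 0 < D) (hnh : 4 ≤ nh) (hnv : 4 ≤ nv) :
    DifferentiableAt ℝ (fun α => (2*α - α^2) / lbar D nh nv α) 0 ∧
    deriv (fun α => (2*α - α^2) / lbar D nh nv α) 0 = 2 / lbar D nh nv 0 ∧
    0 < deriv (fun α => (2*α - α^2) / lbar D nh nv α) 0 ∧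
    DifferentiableAt ℝ (fun α => (2*α - α^2) / lbar D nh nv α) 1 ∧
    deriv (fun α => (2*α - α^2) / lbar D nh nv α) 1 =
      -(2 * D * (nh^2 + nv^2 + 1)) / (3 * (nh + nv) * (lbar D nh nv 1)^2) ∧
    deriv (fun α => (2*α - α^2) / lbar D nh nv α) 1 < 0 := by
  have hs : 0 < nh + nv := by linarith
  have l0 : 0 < lbar D nh nv 0 := by
    have : lbar D nh nv 0 = D * (6 * (nh + nv)^2 - 5) / (6 * (nh + nv)) := by
      unfold lbar
      field_simp
      ring
    rw [this]
    have : 0 < 6 * (nh + nv)^2 - 5 := by nlinarith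
    positivity
  have l1 : 0 < lbar D nh nv 1 := by
    have : lbar D nh nv 1 =
        D * (4 * (nh^2 + nv^2) + nh * nv - 2 + 2 * (nh + nv)) / (2 * (nh + nv)) := by
      unfold lbar
      field_simp
      ring
    rw [this]
    have : 0 < 4 * (nh^2 + nv^2) + nh * nv - 2 + 2 * (nh + nv) := by nlinarith
    positivity
  have hn : ∀ x : ℝ, HasDerivAt (fun α : ℝ => 2*α - α^2) (2 - 2*x) x := by
    intro x
    refine (((hasDerivAt_id' x).const_mul 2).sub (hasDerivAt_pow 2 x)).congr_deriv ?_
    push_cast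
    ring
  have g0 := (hn 0).fun_div (lbar_hasDerivAt_aux D nh nv 0) l0.ne'
  have g1 := (hn 1).fun_div (lbar_hasDerivAt_aux D nh nv 1) l1.ne'
  have e0 : deriv (fun α => (2*α - α^2) / lbar D nh nv α) 0 = 2 / lbar D nh nv 0 := by
    rw [g0.deriv]
    field_simp
    ring
  have e1 : deriv (fun α => (2*α - α^2) / lbar D nh nv α) 1 =
      -(2 * D * (nh^2 + nv^2 + 1)) / (3 * (nh + nv) * (lbar D nh nv 1)^2) := by
    rw [g1.deriv]
    field_simp
    ring
  refine ⟨g0.differentiableAt, e0, ?_, g1.differentiableAt, e1, ?_⟩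
  · rw [e0]
    positivity
  · rw [e1, neg_div]
    have : 0 < (2 * D * (nh^2 + nv^2 + 1)) / (3 * (nh + nv) * (lbar D nh nv 1)^2) := by
      positivity
    linarith
end

section
/- Fix real constants D > 0, τ_e > 0, a > 0, b > 0 and reals n_h, n_v with n_h ≥ 4, n_v ≥ 4, n_h ≤ (3/2)·n_v and n_v ≤ (3/2)·n_h. Define, for x ∈ [0, n_h + n_v], the maximum throughput function T_M(x) = (D/τ_e) · (n_h·(n_v − 1) + n_v·(n_h − 1))/(2·(a + b·(n_h + n_v))) · (2α − α²)/l̄(n_h, n_v, α), where α = x/(n_h + n_v). Then T_M attains its maximum over [0, n_h + n_v] at some interior point x* ∈ (0, n_h + n_v); in particular, the maximum throughput satisfies T_M(x*) > T_M(n_h + n_v) and T_M(x*) > T_M(0) = 0, so the maximum is not achieved by opening all loading stations. -/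
/-- Maximum-throughput function of the (real-valued) number of open loading stations. -/
noncomputable def TM (D τe a b nh nv x : ℝ) : ℝ :=
  (D / τe) * ((nh * (nv - 1) + nv * (nh - 1)) / (2 * (a + b * (nh + nv)))) *
    ((2 * (x / (nh + nv)) - (x / (nh + nv))^2) / lbar D nh nv (x / (nh + nv)))

lemma lbar_eq' (D nh nv α : ℝ) (hs : 0 < nh + nv) : lbar D nh nv α =
    D / (6 * (nh + nv)) * ((nh^2 + nv^2) * (-α^4 - 5*α^2 + 18*α) + 3 * (nh * nv) * (2*α - α^2)
      + (3*α^3 - α^2 - 3*α - 5) + 6 * (nh+nv)^2 * (1-α)^2 + 6 * (nh + nv) * (2*α-α^2)) := by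
  unfold lbar
  field_simp
  ring

lemma lbar_pos' (D nh nv α : ℝ) (hD : 0 < D) (hnh : 4 ≤ nh) (hnv : 4 ≤ nv)
    (h0 : 0 ≤ α) (h1 : α ≤ 1) : 0 < lbar D nh nv α := by
  have hs : 0 < nh + nv := by linarith
  rw [lbar_eq' D nh nv α hs]
  apply mul_pos (by positivity)
  have hA : 32 ≤ nh^2 + nv^2 := by nlinarith
  have hP : 0 ≤ nh * nv := by positivity
  have hS : 64 ≤ (nh+nv)^2 := by nlinarith
  have hu : 0 ≤ 2*α - α^2 := by nlinarith
  have h2 : α^2 ≤ α := by nlinarith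
  have h4 : α^4 ≤ α := by
    have : α^4 ≤ α^2 := by nlinarith [sq_nonneg α]
    linarith
  have h3 : 0 ≤ α^3 := by positivity
  have e1 : 32 * (12 * α) ≤ (nh^2 + nv^2) * (-α^4 - 5*α^2 + 18*α) :=
    mul_le_mul hA (by linarith) (by linarith) (by linarith)
  have e2 : 64 * (1-α)^2 ≤ (nh+nv)^2 * (1-α)^2 := mul_le_mul_of_nonneg_right hS (sq_nonneg _)
  have e3 : 0 ≤ (nh * nv) * (2*α - α^2) := mul_nonneg hP hu
  have e4 : 0 ≤ (nh + nv) * (2*α - α^2) := mul_nonneg hs.le hu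
  nlinarith [sq_nonneg (1 - 2*α)]

theorem TM_interior_max
    (D τe a b nh nv : ℝ) (hD : 0 < D) (hτe : 0 < τe) (ha : 0 < a) (hb : 0 < b)
    (hnh : 4 ≤ nh) (hnv : 4 ≤ nv) (hhv : nh ≤ (3/2) * nv) (hvh : nv ≤ (3/2) * nh) :
    ∃ xstar ∈ Set.Ioo (0:ℝ) (nh + nv),
      (∀ x ∈ Set.Icc (0:ℝ) (nh + nv), TM D τe a b nh nv x ≤ TM D τe a b nh nv xstar) ∧
      TM D τe a b nh nv (nh + nv) < TM D τe a b nh nv xstar ∧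
      TM D τe a b nh nv 0 < TM D τe a b nh nv xstar ∧
      TM D τe a b nh nv 0 = 0 := by
  have hs : 0 < nh + nv := by linarith
  have hC : 0 < (D / τe) * ((nh * (nv - 1) + nv * (nh - 1)) / (2 * (a + b * (nh + nv)))) := by
    have : 0 < nh * (nv - 1) + nv * (nh - 1) := by nlinarith
    positivity
  have hT0 : TM D τe a b nh nv 0 = 0 := by simp [TM]
  have hl1 := lbar_pos' D nh nv 1 hD hnh hnv (by norm_num) (by norm_num)
  have hl2 := lbar_pos' D nh nv (4/5) hD hnh hnv (by norm_num) (by norm_num)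
  have hTs : 0 < TM D τe a b nh nv (nh + nv) := by
    unfold TM
    rw [div_self hs.ne']
    apply mul_pos hC
    apply div_pos (by norm_num) hl1
  have hlt : TM D τe a b nh nv (nh + nv) < TM D τe a b nh nv (4/5 * (nh + nv)) := by
    unfold TM
    rw [div_self hs.ne', mul_div_cancel_right₀ _ hs.ne']
    apply mul_lt_mul_of_pos_left _ hC
    rw [div_lt_div_iff₀ hl1 hl2, lbar_eq' D nh nv 1 hs, lbar_eq' D nh nv (4/5) hs]
    have hk : 0 < D / (6 * (nh + nv)) := by positivity
    rw [mul_left_comm, mul_left_comm _ (D / (6 * (nh + nv)))]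
    apply mul_lt_mul_of_pos_left _ hk
    nlinarith [sq_nonneg (nh - nv), sq_nonneg nh]
  have hcont : ContinuousOn (fun x => TM D τe a b nh nv x) (Set.Icc 0 (nh + nv)) := by
    unfold TM
    apply ContinuousOn.mul continuousOn_const
    apply ContinuousOn.div
    · fun_prop
    · unfold lbar; fun_prop
    · intro x hx
      exact (lbar_pos' D nh nv _ hD hnh hnv (div_nonneg hx.1 hs.le)
        ((div_le_one hs).2 hx.2)).ne'
  obtain ⟨x, hx, hmax⟩ := isCompact_Icc.exists_isMaxOn (Set.nonempty_Icc.2 hs.le) hcont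
  have hm : ∀ y ∈ Set.Icc (0:ℝ) (nh + nv), TM D τe a b nh nv y ≤ TM D τe a b nh nv x :=
    fun y hy => hmax hy
  have h45 := hm (4/5 * (nh + nv)) ⟨by linarith, by linarith⟩
  have h1 : TM D τe a b nh nv (nh + nv) < TM D τe a b nh nv x := lt_of_lt_of_le hlt h45
  have h2 : TM D τe a b nh nv 0 < TM D τe a b nh nv x := by rw [hT0]; exact hTs.trans h1
  refine ⟨x, ⟨lt_of_le_of_ne hx.1 ?_, lt_of_le_of_ne hx.2 ?_⟩, hm, h1, h2, hT0⟩
  · rintro rfl; exact lt_irrefl _ h2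
  · rintro rfl; exact lt_irrefl _ h1
end
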